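/- Let G be a finitely generated, finitely presented group having a golden configuration pair, and let H be a finitely generated group with G ≈ₜ H. Then G is isomorphic to a quotient of H, i.e., there exists a normal subgroup 𝔑 of H with G ≅ H/𝔑. -/

import Mathlib

/-!
Let `(g, E)` be a golden configuration pair of `G`. Refine `E` to a partition `E'` of `G` that
isolates every point of a sufficiently large finite set `T`, and let `(h, F')` be a configuration
pair of `H` with the same two-sided configuration set. Since `{1}` is a cell of `E'`, let
`M ⊆ H` be the corresponding cell of `F'`.

* Around isolated points configurations are rigid (`ConfigMatch.left`, `ConfigMatch.right` and
  their inverse versions): the cell of `b ∈ T` is carried by `h i` to the cell of `g i * b`. Hence a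
  word in `h` whose suffixes evaluate into `T` at `g` moves `M` to the cell of the value of the
  word at `g` (`ConfigMatch.word_mul`).
* As `h i * M` and `M * h i` both correspond to the point `g i`, the set `M` is invariant under
  conjugation, so its left stabilizer `S` is a *normal* subgroup of `H`
  (`ConfigMatch.fiberStabilizer_normal`).
* Finite presentability gives finitely many words, trivial at `g`, whose triviality in a group `Q`
  suffices to define a homomorphism `G →* Q` on the generators `g`
  (`exists_finite_relations`). Taking `T` large enough, these words at `h` lie in `S`, so there
  is a homomorphism `φ : G →* H ⧸ S` sending each `g i` to the class of `h i`; it is surjective.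
* Merging cells of `F'` turns `(h, F')` into a pair with the configuration set of `(g, E)`. For
  `x ≠ 1` the golden property moves the cell of `1`, and with it its subset `M`, off itself by the
  chosen word for `x` evaluated at `h`; so that word is not in `S`, i.e. `φ x ≠ 1`.

The test groups in the golden property live in a universe of their own; finitely generated groups
are countable, so any such group can be moved there (`IsGoldenConfigPair.exists_word`).
-/

open scoped Pointwise

universe u v

/-- `g` is an (ordered, finite) generating tuple of the group `G`. -/
def IsGenerating {G : Type*} [Group G] {n : ℕ} (g : Fin n → G) : Prop :=
  Subgroup.closure (Set.range g) = ⊤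

/-- `E` is an (ordered, finite) partition of the underlying set of `G`:
every element lies in exactly one cell. -/
def IsPartition {G : Type*} {m : ℕ} (E : Fin m → Set G) : Prop :=
  ∀ x : G, ∃! i : Fin m, x ∈ E i

/-- The type in which two-sided configurations corresponding to a generating tuple of
length `n` and a partition of length `m` live: a tuple `(c₀, (c₁,…,cₙ), (c_{n+1},…,c_{2n}))`. -/
abbrev TwoSidedConfig (n m : ℕ) := Fin m × (Fin n → Fin m) × (Fin n → Fin m)

/-- The two-sided configuration set `Con_t(𝔤, ℰ)`. -/
def TwoSidedConfigSet {G : Type*} [Group G] {n m : ℕ} (g : Fin n → G) (E : Fin m → Set G) :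
    Set (TwoSidedConfig n m) :=
  {c | ∃ x ∈ E c.1, ∀ i : Fin n, g i * x ∈ E (c.2.1 i) ∧ x * g i ∈ E (c.2.2 i)}

/-- `Con_t(G)`: the collection of all two-sided configuration sets of `G`,
over all configuration pairs `(𝔤, ℰ)`. -/
def TwoSidedConfigSets (G : Type*) [Group G] : Set (Σ n m : ℕ, Set (TwoSidedConfig n m)) :=
  {S | ∃ g : Fin S.1 → G, ∃ E : Fin S.2.1 → Set G,
    IsGenerating g ∧ IsPartition E ∧ S.2.2 = TwoSidedConfigSet g E}

/-- Two-sided configuration equivalence `G ≈ₜ H`. -/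
def ConfigEqT (G : Type*) (H : Type*) [Group G] [Group H] : Prop :=
  TwoSidedConfigSets G = TwoSidedConfigSets H

/-- The (one-sided) configuration set `Con(𝔤, ℰ)`. -/
def ConfigSet {G : Type*} [Group G] {n m : ℕ} (g : Fin n → G) (E : Fin m → Set G) :
    Set (Fin m × (Fin n → Fin m)) :=
  {c | ∃ x ∈ E c.1, ∀ k : Fin n, g k * x ∈ E (c.2 k)}

/-- `Con(G)`: the collection of all configuration sets of `G`. -/
def ConfigSets (G : Type*) [Group G] : Set (Σ n m : ℕ, Set (Fin m × (Fin n → Fin m))) :=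
  {S | ∃ g : Fin S.1 → G, ∃ E : Fin S.2.1 → Set G,
    IsGenerating g ∧ IsPartition E ∧ S.2.2 = ConfigSet g E}

/-- Configuration equivalence `G ≈ H`. -/
def ConfigEq (G : Type*) (H : Type*) [Group G] [Group H] : Prop :=
  ConfigSets G = ConfigSets H

/-- The word `W(J, ρ; 𝔤) = ∏_{i=1}^{p} g_{J(i)}^{ρ(i)}` associated to a representative
pair `(J, ρ)` (here `ρ i = true` encodes exponent `1`, and `ρ i = false` exponent `-1`). -/
def word {G : Type*} [Group G] {n p : ℕ} (g : Fin n → G) (J : Fin p → Fin n)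
    (ρ : Fin p → Bool) : G :=
  ((List.finRange p).map (fun i => if ρ i then g (J i) else (g (J i))⁻¹)).prod

/-- The configuration pair `(𝔤, q⁻¹(ℰ))` is golden w.r.t. the normal subgroup `N`,
where `ℰ` is a partition of `G ⧸ N` containing the singleton `{1}`. -/
def IsGoldenConfigPair {G : Type u} [Group G] (N : Subgroup G) [N.Normal] {n m : ℕ}
    (g : Fin n → G) (E : Fin m → Set (G ⧸ N)) : Prop :=
  IsGenerating g ∧ IsPartition E ∧
  ∃ i₀ : Fin m, E i₀ = ({1} : Set (G ⧸ N)) ∧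
  ∃ (p : G → ℕ) (J : ∀ x : G, Fin (p x) → Fin n) (ρ : ∀ x : G, Fin (p x) → Bool),
    (∀ x : G, x ∉ N →
      QuotientGroup.mk' N x = word (fun i => QuotientGroup.mk' N (g i)) (J x) (ρ x)) ∧
    (∀ (H : Type v) [Group H] (h : Fin n → H) (F : Fin m → Set H),
      IsGenerating h → IsPartition F →
      TwoSidedConfigSet g (fun i => QuotientGroup.mk' N ⁻¹' E i) = TwoSidedConfigSet h F →
      ∀ x : G, x ∉ N → word h (J x) (ρ x) • F i₀ ∩ F i₀ = ∅)

/-- `G` has a golden configuration pair w.r.t. the normal subgroup `N`. -/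
def HasGoldenConfigPairWrt (G : Type u) [Group G] (N : Subgroup G) [N.Normal] : Prop :=
  ∃ (n m : ℕ) (g : Fin n → G) (E : Fin m → Set (G ⧸ N)), IsGoldenConfigPair.{u, v} N g E

/-- `G` has a golden configuration pair (i.e. one w.r.t. the trivial subgroup). -/
def HasGoldenConfigPair (G : Type u) [Group G] : Prop :=
  HasGoldenConfigPairWrt.{u, v} G ⊥

/-- `(𝔤, ς, {(J_g, ρ_g)})` is a golden system w.r.t. the normal subgroup `N`.  The
finite-range function `ς` on `G ⧸ N` is encoded as a surjection onto `Fin m`; the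
`ς`-partition of `G` is then `v ↦ (ς ∘ q)⁻¹(v)`, `v : Fin m`. -/
def IsGoldenSystem {G : Type u} [Group G] (N : Subgroup G) [N.Normal] {n m : ℕ}
    (g : Fin n → G) (ς : G ⧸ N → Fin m)
    {p : G → ℕ} (J : ∀ x : G, Fin (p x) → Fin n) (ρ : ∀ x : G, Fin (p x) → Bool) : Prop :=
  IsGenerating g ∧ Function.Surjective ς ∧
  (∀ x : G, x ∉ N →
    QuotientGroup.mk' N x = word (fun i => QuotientGroup.mk' N (g i)) (J x) (ρ x)) ∧
  ((fun x : G => ς (QuotientGroup.mk' N x)) ⁻¹' {ς (1 : G ⧸ N)} = (N : Set G)) ∧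
  (∀ (H : Type v) [Group H] (h : Fin n → H) (F : Fin m → Set H),
    IsGenerating h → IsPartition F →
    TwoSidedConfigSet g (fun v => (fun x : G => ς (QuotientGroup.mk' N x)) ⁻¹' {v})
      = TwoSidedConfigSet h F →
    ∀ x : G, x ∉ N →
      word h (J x) (ρ x) • F (ς (1 : G ⧸ N)) ⊆ F (ς (QuotientGroup.mk' N x)))

/-- `G` admits a golden system w.r.t. the normal subgroup `N`. -/
def HasGoldenSystemWrt (G : Type u) [Group G] (N : Subgroup G) [N.Normal] : Prop :=
  ∃ (n m : ℕ) (g : Fin n → G) (ς : G ⧸ N → Fin m) (p : G → ℕ)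
    (J : ∀ x : G, Fin (p x) → Fin n) (ρ : ∀ x : G, Fin (p x) → Bool),
    IsGoldenSystem.{u, v} N g ς J ρ

/-- `G` admits a golden system (i.e. one w.r.t. the trivial subgroup). -/
def HasGoldenSystem (G : Type u) [Group G] : Prop :=
  HasGoldenSystemWrt.{u, v} G ⊥

/-- A group is Hopfian if every surjective endomorphism is an automorphism. -/
def IsHopfianGroup (G : Type*) [Group G] : Prop :=
  ∀ f : G →* G, Function.Surjective f → Function.Bijective f

/-- A group is finitely presented if it is presented by finitely many generators
and finitely many relators. -/
def IsFinitelyPresentedGroup (G : Type*) [Group G] : Prop :=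
  ∃ (n : ℕ) (rels : Set (FreeGroup (Fin n))),
    rels.Finite ∧ Nonempty (PresentedGroup rels ≃* G)

/-- A group is polycyclic if it has a subnormal series with cyclic factors. -/
def IsPolycyclic (G : Type*) [Group G] : Prop :=
  ∃ (k : ℕ) (c : Fin (k + 1) → Subgroup G),
    c 0 = ⊥ ∧ c (Fin.last k) = ⊤ ∧
    ∀ i : Fin k, c i.castSucc ≤ c i.succ ∧
      ∃ hn : ((c i.castSucc).subgroupOf (c i.succ)).Normal,
        letI := hn
        IsCyclic ((c i.succ) ⧸ (c i.castSucc).subgroupOf (c i.succ))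

/-- An FC-group: every conjugacy class is finite. -/
def IsFCGroup (G : Type*) [Group G] : Prop :=
  ∀ g : G, {h : G | IsConj g h}.Finite

/-- A normal subset: `hM = Mh` for all `h`. -/
def IsNormalSubset {H : Type*} [Group H] (M : Set H) : Prop :=
  ∀ h : H, (fun x => h * x) '' M = (fun x => x * h) '' M

/-- `E'` is a refinement of the partition `E`. -/
def IsRefinement {G : Type*} {r s : ℕ} (E' : Fin s → Set G) (E : Fin r → Set G) : Prop :=
  ∀ l : Fin s, ∃ k : Fin r, E' l ⊆ E k

/-- The pairs `(ℰ', ℰ)` and `(ℱ', ℱ)` are similar. -/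
def SimilarPairs {G H : Type*} {r s : ℕ} (E : Fin r → Set G) (E' : Fin s → Set G)
    (F : Fin r → Set H) (F' : Fin s → Set H) : Prop :=
  ∀ k : Fin r, {l : Fin s | (E k ∩ E' l).Nonempty} = {l : Fin s | (F k ∩ F' l).Nonempty}

universe w

/-! ### Partitions as fibres, and matching of configurations -/

/-- The labellings `f` of `G` and `f'` of `H` realise the same two-sided configurations
with respect to the generating tuples `g` and `h`. -/
def ConfigMatch {G : Type*} {H : Type*} [Group G] [Group H] {n : ℕ} {α : Type*}
    (g : Fin n → G) (h : Fin n → H) (f : G → α) (f' : H → α) : Prop :=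
  (∀ x, ∃ y, f' y = f x ∧ ∀ i, f' (h i * y) = f (g i * x) ∧ f' (y * h i) = f (x * g i)) ∧
  (∀ y, ∃ x, f' y = f x ∧ ∀ i, f' (h i * y) = f (g i * x) ∧ f' (y * h i) = f (x * g i))

theorem isPartition_fibers {G : Type*} {m : ℕ} (f : G → Fin m) :
    IsPartition (fun i => f ⁻¹' {i}) := by
  intro x
  exact ⟨f x, rfl, fun j hj => hj.symm⟩

theorem IsPartition.exists_eq_fibers {G : Type*} {m : ℕ} {E : Fin m → Set G}
    (hE : IsPartition E) : ∃ f : G → Fin m, E = fun i => f ⁻¹' {i} := by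
  choose f hf hu using hE
  refine ⟨f, funext fun i => Set.ext fun x => ⟨fun hx => (hu x i hx).symm, ?_⟩⟩
  rintro rfl
  exact hf x

theorem twoSidedConfigSet_eq_iff {G : Type*} {H : Type*} [Group G] [Group H] {n m : ℕ}
    (g : Fin n → G) (h : Fin n → H) (f : G → Fin m) (f' : H → Fin m) :
    TwoSidedConfigSet g (fun i => f ⁻¹' {i}) = TwoSidedConfigSet h (fun i => f' ⁻¹' {i}) ↔
      ConfigMatch g h f f' := by
  constructor
  · intro heq
    constructor
    · intro x
      have hx : (f x, (fun i => f (g i * x)), (fun i => f (x * g i))) ∈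
          TwoSidedConfigSet g (fun i => f ⁻¹' {i}) := ⟨x, rfl, fun i => ⟨rfl, rfl⟩⟩
      rw [heq] at hx
      exact hx
    · intro y
      have hy : (f' y, (fun i => f' (h i * y)), (fun i => f' (y * h i))) ∈
          TwoSidedConfigSet h (fun i => f' ⁻¹' {i}) := ⟨y, rfl, fun i => ⟨rfl, rfl⟩⟩
      rw [← heq] at hy
      obtain ⟨x, hx, hx'⟩ := hy
      exact ⟨x, hx.symm, fun i => ⟨(hx' i).1.symm, (hx' i).2.symm⟩⟩
  · rintro ⟨h1, h2⟩
    ext c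
    constructor
    · rintro ⟨x, hx, hx'⟩
      obtain ⟨y, hy, hy'⟩ := h1 x
      exact ⟨y, hy.trans hx, fun i => ⟨(hy' i).1.trans (hx' i).1, (hy' i).2.trans (hx' i).2⟩⟩
    · rintro ⟨y, hy, hy'⟩
      obtain ⟨x, hx, hx'⟩ := h2 y
      exact ⟨x, hx.symm.trans hy,
        fun i => ⟨(hx' i).1.symm.trans (hy' i).1, (hx' i).2.symm.trans (hy' i).2⟩⟩

theorem ConfigMatch.comp {G : Type*} {H : Type*} [Group G] [Group H] {n : ℕ} {α β : Type*}
    {g : Fin n → G} {h : Fin n → H} {f : G → α} {f' : H → α} (hm : ConfigMatch g h f f')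
    (π : α → β) : ConfigMatch g h (π ∘ f) (π ∘ f') := by
  constructor
  · intro x
    obtain ⟨y, hy, hy'⟩ := hm.1 x
    exact ⟨y, congrArg π hy, fun i => ⟨congrArg π (hy' i).1, congrArg π (hy' i).2⟩⟩
  · intro y
    obtain ⟨x, hx, hx'⟩ := hm.2 y
    exact ⟨x, congrArg π hx, fun i => ⟨congrArg π (hx' i).1, congrArg π (hx' i).2⟩⟩

theorem ConfigMatch.mulEquiv {G : Type*} {H : Type*} {K : Type*} [Group G] [Group H] [Group K]
    {n : ℕ} {α : Type*} {g : Fin n → G} {h : Fin n → H} {f : G → α} {f' : H → α}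
    (hm : ConfigMatch g h f f') (e : H ≃* K) :
    ConfigMatch g (fun i => e (h i)) f (fun k => f' (e.symm k)) := by
  constructor
  · intro x
    obtain ⟨y, hy, hy'⟩ := hm.1 x
    exact ⟨e y, by simpa using hy, fun i => by simpa using hy' i⟩
  · intro y
    obtain ⟨x, hx, hx'⟩ := hm.2 (e.symm y)
    exact ⟨x, hx, fun i => by simpa using hx' i⟩

/-- Every partition of `G`, given by a labelling `c`, has a finite refinement `f` that isolates
all points of a given finite set. -/
theorem exists_isolating_refinement {G : Type*} {m : ℕ} (c : G → Fin m) {T : Set G}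
    (hT : T.Finite) :
    ∃ (k : ℕ) (f : G → Fin k) (π : Fin k → Fin m), π ∘ f = c ∧
      ∀ b ∈ T, ∀ x, f x = f b → x = b := by
  classical
  have := hT.fintype
  let ε := Fintype.equivFin (Fin m × (T → Prop))
  refine ⟨_, fun x => ε (c x, fun t => x = t), fun i => (ε.symm i).1, ?_, ?_⟩
  · funext x
    simp
  · intro b hb x hx
    have h2 := congrFun (congrArg Prod.snd (ε.injective hx)) ⟨b, hb⟩
    simpa using h2

/-! ### Rigidity around isolated points -/

section Rigid

variable {G : Type*} {H : Type*} [Group G] [Group H] {n : ℕ} {α : Type*}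
  {g : Fin n → G} {h : Fin n → H} {f : G → α} {f' : H → α}

theorem ConfigMatch.left (hm : ConfigMatch g h f f') {b : G} (hb : ∀ x, f x = f b → x = b)
    {y : H} (hy : f' y = f b) (i : Fin n) : f' (h i * y) = f (g i * b) := by
  obtain ⟨x, hx, hx'⟩ := hm.2 y
  rw [← hb x (hx.symm.trans hy)]
  exact (hx' i).1

theorem ConfigMatch.right (hm : ConfigMatch g h f f') {b : G} (hb : ∀ x, f x = f b → x = b)
    {y : H} (hy : f' y = f b) (i : Fin n) : f' (y * h i) = f (b * g i) := by
  obtain ⟨x, hx, hx'⟩ := hm.2 y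
  rw [← hb x (hx.symm.trans hy)]
  exact (hx' i).2

theorem ConfigMatch.left_inv (hm : ConfigMatch g h f f') {b : G}
    (hb : ∀ x, f x = f b → x = b) {y : H} {i : Fin n} (hy : f' (h i * y) = f b) :
    f' y = f ((g i)⁻¹ * b) := by
  obtain ⟨x, hx, hx'⟩ := hm.2 y
  rw [← hb (g i * x) ((hx' i).1.symm.trans hy), inv_mul_cancel_left]
  exact hx

theorem ConfigMatch.right_inv (hm : ConfigMatch g h f f') {b : G}
    (hb : ∀ x, f x = f b → x = b) {y : H} {i : Fin n} (hy : f' (y * h i) = f b) :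
    f' y = f (b * (g i)⁻¹) := by
  obtain ⟨x, hx, hx'⟩ := hm.2 y
  rw [← hb (x * g i) ((hx' i).2.symm.trans hy), mul_inv_cancel_right]
  exact hx

/-- If all suffixes of the word `L` take isolated values at `g`, then `L` evaluated at `h`
carries the cell matching `1` into the cell matching the value of `L` at `g`. -/
theorem ConfigMatch.word_mul (hm : ConfigMatch g h f f') (L : List (Fin n × Bool))
    (hL : ∀ l, l <:+ L → ∀ x, f x = f (FreeGroup.lift g (FreeGroup.mk l)) →
      x = FreeGroup.lift g (FreeGroup.mk l))
    {y : H} (hy : f' y = f 1) :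
    f' (FreeGroup.lift h (FreeGroup.mk L) * y) = f (FreeGroup.lift g (FreeGroup.mk L)) := by
  induction L with
  | nil => simpa [FreeGroup.lift_mk] using hy
  | cons a L ih =>
    have ih' := ih fun l hl => hL l (hl.trans (List.suffix_cons a L))
    have hb := hL L (List.suffix_cons a L)
    rcases a with ⟨i, _ | _⟩
    · have h1 : f' (h i * ((h i)⁻¹ * (FreeGroup.lift h (FreeGroup.mk L) * y))) =
          f (FreeGroup.lift g (FreeGroup.mk L)) := by
        rw [mul_inv_cancel_left]
        exact ih'
      have h2 := hm.left_inv hb h1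
      simpa [FreeGroup.lift_mk, mul_assoc] using h2
    · have h2 := hm.left hb ih' i
      simpa [FreeGroup.lift_mk, mul_assoc] using h2

/-- The left stabilizer of the fibre of `f'` over `a`. -/
def fiberStabilizer (f' : H → α) (a : α) : Subgroup H where
  carrier := {k | ∀ y, f' (k * y) = a ↔ f' y = a}
  one_mem' := fun y => by rw [one_mul]
  mul_mem' := fun {k l} hk hl y => by rw [mul_assoc, hk, hl]
  inv_mem' := fun {k} hk y => by rw [← hk, mul_inv_cancel_left]

/-- The cell matching an isolated `1` is invariant under conjugation, because both of its
translates by `h i` match `g i`; so its left stabilizer is normal. -/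
theorem ConfigMatch.fiberStabilizer_normal (hm : ConfigMatch g h f f') (hh : IsGenerating h)
    (h1 : ∀ x, f x = f 1 → x = 1) (hi : ∀ i, ∀ x, f x = f (g i)⁻¹ → x = (g i)⁻¹) :
    (fiberStabilizer f' (f 1)).Normal := by
  have conj : ∀ a y : H, f' (a * y * a⁻¹) = f 1 ↔ f' y = f 1 := by
    intro a
    have ha : a ∈ Subgroup.closure (Set.range h) := by
      rw [show Subgroup.closure (Set.range h) = ⊤ from hh]
      trivial
    induction ha using Subgroup.closure_induction with
    | mem a ha =>
      obtain ⟨i, rfl⟩ := ha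
      intro y
      -- Both conditions say that `h i` times `w := y * (h i)⁻¹`, on one side or the other,
      -- lies in the cell of `1`, i.e. that `w` lies in the cell of `(g i)⁻¹`.
      constructor
      · intro hy
        rw [mul_assoc] at hy
        have h2 := hm.left_inv h1 hy
        rw [mul_one] at h2
        have h3 := hm.right (hi i) h2 i
        simpa using h3
      · intro hy
        have hy' : f' (y * (h i)⁻¹ * h i) = f 1 := by rwa [inv_mul_cancel_right]
        have h2 := hm.right_inv h1 hy'
        rw [one_mul] at h2
        have h3 := hm.left (hi i) h2 i
        rwa [mul_inv_cancel, ← mul_assoc] at h3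
    | one => simp
    | mul a b _ _ iha ihb =>
      intro y
      rw [← ihb y, ← iha (b * y * b⁻¹), mul_inv_rev]
      simp only [mul_assoc]
    | inv a _ iha =>
      intro y
      rw [← iha]
      simp [mul_assoc]
  refine ⟨fun k hk a y => ?_⟩
  have e1 := conj a (k * (a⁻¹ * y * a))
  have e2 := hk (a⁻¹ * y * a)
  have e3 := conj a⁻¹ y
  rw [inv_inv] at e3
  rw [← e3, ← e2, ← e1]
  simp [mul_assoc]

theorem ConfigMatch.lift_mem_fiberStabilizer (hm : ConfigMatch g h f f') {w : FreeGroup (Fin n)}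
    (hw : FreeGroup.lift g w = 1)
    (hs : ∀ l, l <:+ w.toWord ∨ l <:+ w⁻¹.toWord → ∀ x,
      f x = f (FreeGroup.lift g (FreeGroup.mk l)) → x = FreeGroup.lift g (FreeGroup.mk l)) :
    FreeGroup.lift h w ∈ fiberStabilizer f' (f 1) := by
  intro y
  constructor
  · intro hy
    have h2 := hm.word_mul w⁻¹.toWord (fun l hl => hs l (Or.inr hl)) hy
    rw [FreeGroup.mk_toWord, map_inv, map_inv, inv_mul_cancel_left, hw, inv_one] at h2
    exact h2
  · intro hy
    have h2 := hm.word_mul w.toWord (fun l hl => hs l (Or.inl hl)) hy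
    rw [FreeGroup.mk_toWord, hw] at h2
    exact h2

end Rigid

/-! ### Words, generators and presentations -/

theorem map_word {G : Type*} {H : Type*} [Group G] [Group H] {n p : ℕ} (φ : G →* H)
    (g : Fin n → G) (J : Fin p → Fin n) (ρ : Fin p → Bool) :
    φ (word g J ρ) = word (fun i => φ (g i)) J ρ := by
  simp only [word, map_list_prod, List.map_map]
  congr 2
  funext i
  simp only [Function.comp_apply]
  split <;> simp

/-- In a finitely presented group `G`, for *any* finite generating tuple `g`, finitely many
relations among the `g i` suffice to define homomorphisms out of `G`. -/
theorem exists_finite_relations {G : Type*} [Group G] (hG : IsFinitelyPresentedGroup G) {n : ℕ}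
    {g : Fin n → G} (hg : IsGenerating g) :
    ∃ W : Set (FreeGroup (Fin n)), W.Finite ∧ (∀ w ∈ W, FreeGroup.lift g w = 1) ∧
      ∀ (Q : Type w) [Group Q] (q : Fin n → Q), (∀ w ∈ W, FreeGroup.lift q w = 1) →
        ∃ φ : G →* Q, ∀ i, φ (g i) = q i := by
  obtain ⟨k, rels, hfin, ⟨ψ⟩⟩ := hG
  have hsurj : Function.Surjective (FreeGroup.lift g) :=
    FreeGroup.lift_surjective_iff_closure_range_eq_top.2 hg
  -- `u j` expresses the `j`-th generator of the presentation in terms of `g`,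
  -- and `v i` expresses `g i` in terms of the generators of the presentation.
  choose u hu using fun j : Fin k => hsurj (ψ (PresentedGroup.of j))
  choose v hv using fun i : Fin n => PresentedGroup.mk_surjective rels (ψ.symm (g i))
  have hU : ∀ r, FreeGroup.lift g (FreeGroup.lift u r) = ψ (PresentedGroup.mk rels r) := by
    intro r
    have : (FreeGroup.lift g).comp (FreeGroup.lift u) =
        ψ.toMonoidHom.comp (PresentedGroup.mk rels) := by
      ext j
      simpa using! hu j
    exact DFunLike.congr_fun this r
  refine ⟨FreeGroup.lift u '' rels ∪
    Set.range (fun i => FreeGroup.lift u (v i) * (FreeGroup.of i)⁻¹),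
    (hfin.image _).union (Set.finite_range _), ?_, ?_⟩
  · rintro w (⟨r, hr, rfl⟩ | ⟨i, rfl⟩)
    · rw [hU, PresentedGroup.one_of_mem hr, map_one]
    · simp [hU, hv]
  · intro Q _ q hq
    have hQ : ∀ r, FreeGroup.lift q (FreeGroup.lift u r) =
        FreeGroup.lift (fun j => FreeGroup.lift q (u j)) r := by
      intro r
      have : (FreeGroup.lift q).comp (FreeGroup.lift u) =
          FreeGroup.lift (fun j => FreeGroup.lift q (u j)) := by
        ext j
        simp
      exact DFunLike.congr_fun this r
    have hrel : ∀ r ∈ rels, FreeGroup.lift (fun j => FreeGroup.lift q (u j)) r = 1 := by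
      intro r hr
      rw [← hQ]
      exact hq _ (Or.inl ⟨r, hr, rfl⟩)
    refine ⟨(PresentedGroup.toGroup hrel).comp ψ.symm.toMonoidHom, fun i => ?_⟩
    have h1 := hq _ (Or.inr ⟨i, rfl⟩)
    rw [map_mul, map_inv, FreeGroup.lift_apply_of, mul_inv_eq_one, hQ] at h1
    rw [← h1]
    change PresentedGroup.toGroup hrel (ψ.symm (g i)) = _
    rw [← hv i]
    rfl

/-! ### The golden property -/

/-- The golden property for the trivial subgroup in terms of labellings, with test groups in an
arbitrary universe: `c` labels the cells of the golden partition, and `(J x, ρ x)` is the chosen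
word for `x`. The passage between universes uses that a finitely generated `H` is countable. -/
theorem IsGoldenConfigPair.exists_word {G : Type u} [Group G] {n m : ℕ} {g : Fin n → G}
    {E : Fin m → Set (G ⧸ (⊥ : Subgroup G))} (hgold : IsGoldenConfigPair.{u, v} ⊥ g E) :
    ∃ (c : G → Fin m) (p : G → ℕ) (J : ∀ x : G, Fin (p x) → Fin n)
      (ρ : ∀ x : G, Fin (p x) → Bool),
      (∀ x, x ≠ 1 → x = word g (J x) (ρ x)) ∧
      ∀ (H : Type w) [Group H] (h : Fin n → H) (d : H → Fin m), IsGenerating h →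
        ConfigMatch g h c d → ∀ x, x ≠ 1 → ∀ y, d y = c 1 →
          d (word h (J x) (ρ x) * y) ≠ c 1 := by
  obtain ⟨-, hE, i₀, hi₀, p, J, ρ, hword, hmove⟩ := hgold
  obtain ⟨c, rfl⟩ := hE.exists_eq_fibers
  have hc : c 1 = i₀ := by
    have : (1 : G ⧸ (⊥ : Subgroup G)) ∈ c ⁻¹' {i₀} := by
      exact (Set.ext_iff.1 hi₀ 1).2 rfl
    exact this
  refine ⟨fun x => c (QuotientGroup.mk' ⊥ x), p, J, ρ, fun x hx => ?_, ?_⟩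
  · have h1 := hword x (by simpa using hx)
    rw [← map_word, QuotientGroup.mk'_apply, QuotientGroup.mk'_apply, QuotientGroup.eq,
      Subgroup.mem_bot, inv_mul_eq_one] at h1
    exact h1
  · intro H _ h d hh hm x hx y hy hy'
    replace hy : d y = i₀ := hy.trans hc
    replace hy' : d (word h (J x) (ρ x) * y) = i₀ := hy'.trans hc
    have hcount : Countable H := by
      have : Function.Surjective (FreeGroup.lift h) :=
        FreeGroup.lift_surjective_iff_closure_range_eq_top.2 hh
      exact this.countable
    let e : H ≃* Shrink.{v} H := Shrink.mulEquiv.symm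
    have hgen : IsGenerating (fun i => e (h i)) := by
      have h1 : Subgroup.map e.toMonoidHom (Subgroup.closure (Set.range h)) = ⊤ := by
        rw [show Subgroup.closure (Set.range h) = ⊤ from hh]
        exact Subgroup.map_top_of_surjective _ e.surjective
      rw [MonoidHom.map_closure, ← Set.range_comp] at h1
      exact h1
    have key := hmove (Shrink.{v} H) (fun i => e (h i))
      (fun i => (fun k => d (e.symm k)) ⁻¹' {i}) hgen (isPartition_fibers _)
      ((twoSidedConfigSet_eq_iff g _ (fun x => c (QuotientGroup.mk' ⊥ x)) _).2 (hm.mulEquiv e))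
      x (by simpa using hx)
    have hmem : e (word h (J x) (ρ x) * y) ∈
        word (fun i => e (h i)) (J x) (ρ x) • (fun k => d (e.symm k)) ⁻¹' {i₀} ∩
          (fun k => d (e.symm k)) ⁻¹' {i₀} := by
      refine ⟨⟨e y, by simpa using hy, ?_⟩, by simpa using hy'⟩
      have h2 := map_word e.toMonoidHom h (J x) (ρ x)
      change e (word h (J x) (ρ x)) = word (fun i => e (h i)) (J x) (ρ x) at h2
      simp [h2]
    rw [key] at hmem
    exact hmem

/-- a finitely generated, finitely presented group with a golden
configuration pair is isomorphic to a quotient of any finitely generated group two-sided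
configuration equivalent to it. -/
theorem isomorphic_to_quotient_of_configEqT_of_goldenConfigPair {G : Type u} {H : Type w}
    [Group G] [Group H] (hGfg : Group.FG G) (hHfg : Group.FG H)
    (hGfp : IsFinitelyPresentedGroup G)
    (hgold : HasGoldenConfigPair.{u, v} G) (heq : ConfigEqT G H) :
    ∃ 𝔑 : Subgroup H, ∃ hn : 𝔑.Normal,
      letI := hn
      Nonempty (G ≃* (H ⧸ 𝔑)) := by
  classical
  obtain ⟨n, m, g, E, hgE⟩ := hgold
  have hg : IsGenerating g := hgE.1
  obtain ⟨c, p, J, ρ, hword, hmove⟩ := IsGoldenConfigPair.exists_word.{u, v, w} hgE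
  obtain ⟨W, hWfin, hW1, hWhom⟩ := exists_finite_relations.{w} hGfp hg
  -- The points to isolate: `1`, the inverses of the generators, and the values of all suffixes
  -- of the relations and of their inverses.
  let T : Set G := insert 1 (Set.range fun i => (g i)⁻¹) ∪
    ⋃ w ∈ W, (fun l => FreeGroup.lift g (FreeGroup.mk l)) ''
      {l | l ∈ w.toWord.tails ++ w⁻¹.toWord.tails}
  have hT : T.Finite :=
    ((Set.finite_range _).insert 1).union
      (hWfin.biUnion fun w _ => (List.finite_toSet _).image _)
  obtain ⟨k, f, π, hπ, hiso⟩ := exists_isolating_refinement c hT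
  have hmem : (⟨n, k, TwoSidedConfigSet g (fun i => f ⁻¹' {i})⟩ :
      Σ n m : ℕ, Set (TwoSidedConfig n m)) ∈ TwoSidedConfigSets H := by
    rw [← show TwoSidedConfigSets G = TwoSidedConfigSets H from heq]
    exact ⟨g, _, hg, isPartition_fibers f, rfl⟩
  obtain ⟨h, F, hh, hF, hcon⟩ := hmem
  change Fin n → H at h
  change Fin k → Set H at F
  obtain ⟨f', rfl⟩ := hF.exists_eq_fibers
  have hm : ConfigMatch g h f f' := (twoSidedConfigSet_eq_iff g h f f').1 hcon
  have hiso1 : ∀ x, f x = f 1 → x = 1 := hiso 1 (Or.inl (Or.inl rfl))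
  have hnormal : (fiberStabilizer f' (f 1)).Normal :=
    hm.fiberStabilizer_normal hh hiso1 fun i => hiso _ (Or.inl (Or.inr ⟨i, rfl⟩))
  refine ⟨fiberStabilizer f' (f 1), hnormal, ?_⟩
  let q := QuotientGroup.mk' (fiberStabilizer f' (f 1))
  have hlift : ∀ w, FreeGroup.lift (fun i => q (h i)) w = q (FreeGroup.lift h w) := by
    intro w
    have : FreeGroup.lift (fun i => q (h i)) = q.comp (FreeGroup.lift h) := by
      ext i
      simp
    exact DFunLike.congr_fun this w
  obtain ⟨φ, hφ⟩ := hWhom _ (fun i => q (h i)) (by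
    intro w hw
    rw [hlift]
    refine (QuotientGroup.eq_one_iff _).2 (hm.lift_mem_fiberStabilizer (hW1 w hw) ?_)
    intro l hl
    refine hiso _ (Or.inr (Set.mem_biUnion hw ⟨l, ?_, rfl⟩))
    simpa using hl)
  have hφsurj : Function.Surjective φ := by
    intro z
    obtain ⟨y, rfl⟩ := QuotientGroup.mk'_surjective _ z
    obtain ⟨w, rfl⟩ := FreeGroup.lift_surjective_iff_closure_range_eq_top.2 hh y
    refine ⟨FreeGroup.lift g w, ?_⟩
    have : φ.comp (FreeGroup.lift g) = q.comp (FreeGroup.lift h) := by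
      ext i
      simpa using hφ i
    exact DFunLike.congr_fun this w
  have hφinj : Function.Injective φ := by
    rw [injective_iff_map_eq_one]
    intro x hx
    by_contra hx1
    have h1 : word h (J x) (ρ x) ∈ fiberStabilizer f' (f 1) := by
      rw [hword x hx1, map_word, funext hφ, ← map_word] at hx
      exact (QuotientGroup.eq_one_iff _).1 hx
    obtain ⟨y, hy, -⟩ := hm.1 1
    have hπ1 : π (f 1) = c 1 := congrFun hπ 1
    have hm' := hm.comp π
    rw [hπ] at hm'
    refine hmove H h (π ∘ f') hh hm' x hx1 y ?_ ?_
    · rw [Function.comp_apply, hy, hπ1]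
    · rw [Function.comp_apply, (h1 y).2 hy, hπ1]
  exact ⟨MulEquiv.ofBijective φ ⟨hφinj, hφsurj⟩⟩
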